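/- arXiv:1010.2296 — 3 statements merged into one kernel-verified Lean document; each statement's English description precedes it below -/
import Mathlib

section
/- Let G be a finite connected simple graph with minimum degree δ(G) ≥ 2. Then rc(G) ≤ γ_c(G) + 2, where γ_c(G) is the connected domination number of G. -/
open SimpleGraph Set

/-- The predicate that an edge colouring `c` makes `G` rainbow connected: every pair of
vertices is joined by a path no two of whose edges receive the same colour. -/
def RainbowConnectedUnder {V : Type*} (G : SimpleGraph V) (c : Sym2 V → ℕ) : Prop :=
  ∀ u v : V, ∃ p : G.Walk u v, p.IsPath ∧ (p.edges.map c).Nodup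

/-- The rainbow connection number of `G`: the least `n` such that some edge colouring
using colours `< n` makes `G` rainbow connected. -/
noncomputable def rc {V : Type*} (G : SimpleGraph V) : ℕ :=
  sInf {n | ∃ c : Sym2 V → ℕ, (∀ e ∈ G.edgeSet, c e < n) ∧ RainbowConnectedUnder G c}

/-- Degree of a vertex (as the cardinality of its neighbour set). -/
noncomputable def deg {V : Type*} (G : SimpleGraph V) (v : V) : ℕ := (G.neighborSet v).ncard

/-- `D` is a dominating set of `G`. -/
def IsDominatingSet {V : Type*} (G : SimpleGraph V) (D : Set V) : Prop :=
  ∀ v : V, v ∈ D ∨ ∃ u ∈ D, G.Adj u v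

/-- The connected domination number of `G`. -/
noncomputable def connDomNum {V : Type*} (G : SimpleGraph V) : ℕ :=
  sInf {n | ∃ D : Set V, D.ncard = n ∧ IsDominatingSet G D ∧ (G.induce D).Connected}

/-- Distance of a vertex `v` to a set of vertices `D`. -/
noncomputable def distSet {V : Type*} (G : SimpleGraph V) (D : Set V) (v : V) : ℕ :=
  sInf ((fun u => G.dist u v) '' D)

/-- Diameter of `G`. -/
noncomputable def graphDiam {V : Type*} (G : SimpleGraph V) : ℕ :=
  sSup (Set.range fun p : V × V => G.dist p.1 p.2)

/-- Eccentricity of a vertex. -/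
noncomputable def ecc {V : Type*} (G : SimpleGraph V) (v : V) : ℕ :=
  sSup (Set.range fun u => G.dist v u)

/-- Radius of `G`. -/
noncomputable def graphRadius {V : Type*} (G : SimpleGraph V) : ℕ :=
  sInf (Set.range fun v => ecc G v)

/-- `G` is an interval graph: vertices can be assigned nonempty closed real intervals such
that two distinct vertices are adjacent iff their intervals intersect. -/
def IsIntervalGraph {V : Type*} (G : SimpleGraph V) : Prop :=
  ∃ a b : V → ℝ, (∀ v, a v ≤ b v) ∧
    ∀ u v : V, u ≠ v → (G.Adj u v ↔ (Set.Icc (a u) (b u) ∩ Set.Icc (a v) (b v)).Nonempty)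

/-- `G` is a unit interval graph. -/
def IsUnitIntervalGraph {V : Type*} (G : SimpleGraph V) : Prop :=
  ∃ a : V → ℝ,
    ∀ u v : V, u ≠ v →
      (G.Adj u v ↔ (Set.Icc (a u) (a u + 1) ∩ Set.Icc (a v) (a v + 1)).Nonempty)

/-- `G` is a circular arc graph: vertices can be assigned nonempty closed arcs of a circle
(images of closed intervals in `AddCircle 1`) such that two distinct vertices are adjacent
iff their arcs intersect. -/
def IsCircularArcGraph {V : Type*} (G : SimpleGraph V) : Prop :=
  ∃ a b : V → ℝ, (∀ v, a v ≤ b v) ∧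
    ∀ u v : V, u ≠ v → (G.Adj u v ↔
      (((fun x : ℝ => (x : AddCircle (1:ℝ))) '' Set.Icc (a u) (b u)) ∩
        ((fun x : ℝ => (x : AddCircle (1:ℝ))) '' Set.Icc (a v) (b v))).Nonempty)

/-- There is a path from `x` to `y` avoiding the closed neighbourhood of `z`. -/
def HasAvoidingPath {V : Type*} (G : SimpleGraph V) (x y z : V) : Prop :=
  ∃ p : G.Walk x y, p.IsPath ∧ ∀ w ∈ p.support, w ≠ z ∧ ¬ G.Adj z w

/-- `G` is AT-free: it has no asteroidal triple. -/
def IsATFree {V : Type*} (G : SimpleGraph V) : Prop :=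
  ¬ ∃ x y z : V, x ≠ y ∧ y ≠ z ∧ x ≠ z ∧ ¬G.Adj x y ∧ ¬G.Adj y z ∧ ¬G.Adj x z ∧
    HasAvoidingPath G x y z ∧ HasAvoidingPath G y z x ∧ HasAvoidingPath G x z y

/-- `G` is a threshold graph. -/
def IsThresholdGraph {V : Type*} (G : SimpleGraph V) : Prop :=
  ∃ (w : V → ℝ) (t : ℝ), ∀ u v : V, u ≠ v → (G.Adj u v ↔ t ≤ w u + w v)

/-- `G` is a chain graph: bipartite with the neighbourhoods of one side linearly ordered
by inclusion. -/
def IsChainGraph {V : Type*} (G : SimpleGraph V) : Prop :=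
  ∃ A B : Set V, A ∪ B = Set.univ ∧ Disjoint A B ∧
    (∀ u v : V, G.Adj u v → ¬(u ∈ A ∧ v ∈ A) ∧ ¬(u ∈ B ∧ v ∈ B)) ∧
    ∀ a₁ ∈ A, ∀ a₂ ∈ A,
      G.neighborSet a₁ ⊆ G.neighborSet a₂ ∨ G.neighborSet a₂ ⊆ G.neighborSet a₁

/-- `G` is chordal: it has no induced cycle of length greater than 3. -/
def IsChordal {V : Type*} (G : SimpleGraph V) : Prop :=
  ∀ n : ℕ, 4 ≤ n → IsEmpty (SimpleGraph.cycleGraph n ↪g G)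


theorem exists_index {α : Type*} (s : Finset α) :
    ∃ t : α → ℕ, Set.InjOn t s ∧ (∀ a ∈ s, t a < s.card) ∧ ∀ a, t a ≤ s.card := by
  classical
  refine ⟨fun a => if h : a ∈ s then (s.equivFin ⟨a, h⟩ : ℕ) else 0, ?_, ?_, ?_⟩
  · intro a ha b hb hab
    have ha' : a ∈ s := ha
    have hb' : b ∈ s := hb
    simp only [ha', hb', dite_true] at hab
    have := s.equivFin.injective (Fin.ext hab)
    exact congrArg Subtype.val this
  · intro a ha
    simp only [ha, dite_true]
    exact (s.equivFin ⟨a, ha⟩).2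
  · intro a
    by_cases ha : a ∈ s
    · simp only [ha, dite_true]
      exact (s.equivFin ⟨a, ha⟩).2.le
    · simp [ha]

theorem path_of_walk {V : Type*} {G : SimpleGraph V} {c : Sym2 V → ℕ} {u v : V}
    (p : G.Walk u v) (hp : (p.edges.map c).Nodup) :
    ∃ p : G.Walk u v, p.IsPath ∧ (p.edges.map c).Nodup := by
  classical
  refine ⟨p.bypass, p.bypass_isPath, ?_⟩
  refine List.Nodup.map_on ?_ p.bypass_isPath.isTrail.edges_nodup
  intro x hx y hy hxy
  exact List.inj_on_of_nodup_map hp (p.edges_bypass_subset_edges hx) (p.edges_bypass_subset_edges hy) hxy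

/-- `v` reaches `D` by a walk with colour list `L`. -/
def ReachBy {V : Type*} (G : SimpleGraph V) (c : Sym2 V → ℕ) (D : Set V) (v : V)
    (L : List ℕ) : Prop :=
  ∃ d ∈ D, ∃ p : G.Walk v d, p.edges.map c = L

theorem combine {V : Type*} {G : SimpleGraph V} {c : Sym2 V → ℕ} {D : Set V} {m : ℕ}
    (hT : ∀ d ∈ D, ∀ d' ∈ D, ∃ p : G.Walk d d', (p.edges.map c).Nodup ∧ ∀ x ∈ p.edges.map c, x < m)
    {u v : V} {L M : List ℕ} (hu : ReachBy G c D u L) (hv : ReachBy G c D v M)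
    (hLM : (L ++ M).Nodup) (hm : ∀ x ∈ L ++ M, m ≤ x) :
    ∃ p : G.Walk u v, p.IsPath ∧ (p.edges.map c).Nodup := by
  obtain ⟨d, hd, p, rfl⟩ := hu
  obtain ⟨d', hd', q, rfl⟩ := hv
  obtain ⟨r, hr, hrm⟩ := hT d hd d' hd'
  refine path_of_walk ((p.append r).append q.reverse) ?_
  rw [SimpleGraph.Walk.edges_append, SimpleGraph.Walk.edges_append,
    SimpleGraph.Walk.edges_reverse, List.map_append, List.map_append, List.map_reverse]
  generalize p.edges.map c = L at *
  generalize q.edges.map c = M at *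
  generalize r.edges.map c = R at *
  rw [List.nodup_append] at hLM
  obtain ⟨h1, h2, h3⟩ := hLM
  rw [List.nodup_append, List.nodup_append]
  refine ⟨⟨h1, hr, ?_⟩, List.nodup_reverse.2 h2, ?_⟩
  · intro a ha b hb
    have := hm a (by simp [ha])
    have := hrm b hb
    omega
  · intro a ha b hb
    rw [List.mem_reverse] at hb
    rcases List.mem_append.1 ha with ha | ha
    · exact h3 a ha b hb
    · have := hm b (by simp [hb])
      have := hrm a ha
      omega

theorem exists_max_indep {V : Type*} [Finite V] (G : SimpleGraph V) (D : Set V) :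
    ∃ X : Set V, (∀ x ∈ X, ∀ y ∈ X, ¬ G.Adj x y) ∧ X ⊆ Dᶜ ∧
      ∀ v, v ∉ D → v ∉ X → ∃ x ∈ X, G.Adj v x := by
  obtain ⟨X, hX⟩ := Set.Finite.exists_maximal
    (s := {X : Set V | (∀ x ∈ X, ∀ y ∈ X, ¬ G.Adj x y) ∧ X ⊆ Dᶜ}) (Set.toFinite _)
    ⟨∅, by simp⟩
  refine ⟨X, hX.prop.1, hX.prop.2, ?_⟩
  intro v hvD hvX
  by_contra! hcon
  have hmem : insert v X ∈ {X : Set V | (∀ x ∈ X, ∀ y ∈ X, ¬ G.Adj x y) ∧ X ⊆ Dᶜ} := by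
    refine ⟨?_, Set.insert_subset hvD hX.prop.2⟩
    intro x hx y hy hxy
    rcases hx with rfl | hx <;> rcases hy with rfl | hy
    · exact hxy.ne rfl
    · exact hcon _ hy hxy
    · exact hcon _ hx hxy.symm
    · exact hX.prop.1 _ hx _ hy hxy
  exact hvX (hX.le_of_ge hmem (Set.subset_insert v X) (Set.mem_insert v X))

/-- Existence of the colouring, with `D.ncard = m + 1`. -/
theorem exists_colouring {V : Type*} [Fintype V] (G : SimpleGraph V)
    (hδ : ∀ v : V, 2 ≤ deg G v) (D : Set V) (hdom : IsDominatingSet G D)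
    (hconn : (G.induce D).Connected) :
    ∃ c : Sym2 V → ℕ, (∀ e ∈ G.edgeSet, c e < D.ncard + 2) ∧ RainbowConnectedUnder G c := by
  classical
  obtain ⟨T, hTle, hTree⟩ := hconn.exists_isTree_le
  obtain ⟨m, hm⟩ : ∃ m, m = T.edgeFinset.card := ⟨_, rfl⟩
  have hcard : m + 1 = D.ncard := by
    rw [hm, hTree.card_edgeFinset, Set.ncard_eq_toFinset_card', Set.toFinset_card]
  obtain ⟨t, htinj, htlt, htle⟩ := exists_index (T.edgeFinset.image (Sym2.map (Subtype.val : D → V)))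
  have hEm : (T.edgeFinset.image (Sym2.map (Subtype.val : D → V))).card = m := by
    rw [Finset.card_image_of_injective _ (Sym2.map.injective Subtype.val_injective), hm]
  rw [hEm] at htlt htle
  obtain ⟨X, hXind, hXD, hXmax⟩ := exists_max_indep G D
  have hnb : ∀ v, ∃ d, v ∉ D → d ∈ D ∧ G.Adj v d := by
    intro v
    by_cases hv : v ∈ D
    · exact ⟨v, fun h => absurd hv h⟩
    · rcases hdom v with h | ⟨d, hd, hdv⟩
      · exact absurd h hv
      · exact ⟨d, fun _ => ⟨hd, hdv.symm⟩⟩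
  choose f hf using hnb
  obtain ⟨g, hg⟩ : ∃ g : V → V → ℕ, g = fun v u =>
    if ∀ w, G.Adj v w → w ∈ D then (if u = f v then m else m + 1)
    else if v ∈ X then m else m + 1 := ⟨_, rfl⟩
  have hgle : ∀ v u, g v u ≤ m + 1 := by
    intro v u
    rw [hg]; dsimp only; split_ifs <;> omega
  let F : V → V → ℕ := fun a b =>
    if a ∈ D then (if b ∈ D then t s(a, b) else g b a)
    else (if b ∈ D then g a b else m + 2)
  have hF : ∀ a b, F a b = F b a := by
    intro a b
    simp only [F]
    split_ifs <;> simp [Sym2.eq_swap]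
  let c : Sym2 V → ℕ := Sym2.lift ⟨F, hF⟩
  have hc : ∀ a b, c s(a, b) = F a b := fun a b => rfl
  have hcout : ∀ a b, a ∉ D → b ∈ D → c s(a, b) = g a b := by
    intro a b ha hb
    rw [hc]; simp [F, ha, hb]
  have hcoo : ∀ a b, a ∉ D → b ∉ D → c s(a, b) = m + 2 := by
    intro a b ha hb
    rw [hc]; simp [F, ha, hb]
  have hcT : ∀ e : Sym2 D, c (e.map Subtype.val) = t (e.map Subtype.val) := by
    intro e
    induction e using Sym2.ind with
    | _ a b =>
      rw [Sym2.map_mk, hc]; simp [F]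
  refine ⟨c, ?_, ?_⟩
  · intro e _
    induction e using Sym2.ind with
    | _ a b =>
      rw [hc]
      have h1 := htle s(a, b)
      have h2 := hgle a b
      have h3 := hgle b a
      simp only [F]
      split_ifs <;> omega
  have hT : ∀ d ∈ D, ∀ d' ∈ D, ∃ p : G.Walk d d',
      (p.edges.map c).Nodup ∧ ∀ x ∈ p.edges.map c, x < m := by
    intro d hd d' hd'
    obtain ⟨p, hp⟩ := hTree.connected.exists_isPath ⟨d, hd⟩ ⟨d', hd'⟩
    let φ : T →g G := ⟨Subtype.val, fun {a b} h => hTle h⟩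
    have hE : ∀ e ∈ p.edges, e.map Subtype.val ∈
        T.edgeFinset.image (Sym2.map (Subtype.val : D → V)) := by
      intro e he
      exact Finset.mem_image_of_mem _ (SimpleGraph.mem_edgeFinset.2 (p.edges_subset_edgeSet he))
    refine ⟨p.map φ, ?_, ?_⟩
    · rw [SimpleGraph.Walk.edges_map, List.map_map]
      refine List.Nodup.map_on ?_ hp.isTrail.edges_nodup
      intro x hx y hy hxy
      have hxy' : c (x.map Subtype.val) = c (y.map Subtype.val) := hxy
      rw [hcT, hcT] at hxy'
      exact Sym2.map.injective Subtype.val_injective (htinj (hE x hx) (hE y hy) hxy')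
    · intro x hx
      rw [SimpleGraph.Walk.edges_map, List.map_map, List.mem_map] at hx
      obtain ⟨e, he, rfl⟩ := hx
      have : c (e.map Subtype.val) < m := by
        rw [hcT]; exact htlt _ (hE e he)
      exact this
  have one : ∀ v, v ∉ D → ∀ d ∈ D, G.Adj v d → ReachBy G c D v [g v d] := by
    intro v hv d hd h
    exact ⟨d, hd, h.toWalk, by simp [hcout v d hv hd]⟩
  have two : ∀ v, v ∉ D → ∀ w, w ∉ D → G.Adj v w → ReachBy G c D v [m + 2, g w (f w)] := by
    intro v hv w hw h
    obtain ⟨h1, h2⟩ := hf w hw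
    exact ⟨f w, h1, .cons h h2.toWalk, by simp [hcout w _ hw h1, hcoo v w hv hw]⟩
  have key : ∀ v, ReachBy G c D v [] ∨
      (ReachBy G c D v [m] ∧ ReachBy G c D v [m + 2, m + 1]) ∨
      (ReachBy G c D v [m + 1] ∧ ReachBy G c D v [m + 2, m]) ∨
      (ReachBy G c D v [m] ∧ ReachBy G c D v [m + 1]) := by
    intro v
    by_cases hv : v ∈ D
    · exact Or.inl ⟨v, hv, .nil, by simp⟩
    right
    obtain ⟨hfD, hfa⟩ := hf v hv
    by_cases hZ : ∀ w, G.Adj v w → w ∈ D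
    · right; right
      obtain ⟨b, hb, hbne⟩ := Set.exists_ne_of_one_lt_ncard
        (show 1 < (G.neighborSet v).ncard from hδ v) (f v)
      have h1 := one v hv _ hfD hfa
      have h2 := one v hv b (hZ b hb) hb
      have e1 : g v (f v) = m := by rw [hg]; dsimp only; rw [if_pos hZ, if_pos rfl]
      have e2 : g v b = m + 1 := by rw [hg]; dsimp only; rw [if_pos hZ, if_neg hbne]
      rw [e1] at h1
      rw [e2] at h2
      exact ⟨h1, h2⟩
    · have h1 := one v hv _ hfD hfa
      have gX : ∀ w, (¬ ∀ u, G.Adj w u → u ∈ D) → w ∈ X → ∀ u, g w u = m := by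
        intro w hw hwX u
        rw [hg]; dsimp only; rw [if_neg hw, if_pos hwX]
      have gY : ∀ w, (¬ ∀ u, G.Adj w u → u ∈ D) → w ∉ X → ∀ u, g w u = m + 1 := by
        intro w hw hwX u
        rw [hg]; dsimp only; rw [if_neg hw, if_neg hwX]
      by_cases hvX : v ∈ X
      · left
        have hZ' := hZ
        push Not at hZ'
        obtain ⟨w, hvw, hw⟩ := hZ'
        have h2 := two v hv w hw hvw
        rw [gX v hZ hvX] at h1
        rw [gY w (fun h => hv (h v hvw.symm)) (fun h => hXind v hvX w h hvw)] at h2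
        exact ⟨h1, h2⟩
      · right; left
        obtain ⟨w, hwX, hvw⟩ := hXmax v hv hvX
        have h2 := two v hv w (hXD hwX) hvw
        rw [gY v hZ hvX] at h1
        rw [gX w (fun h => hv (h v hvw.symm)) hwX] at h2
        exact ⟨h1, h2⟩
  intro u v
  rcases key u with hu | ⟨hu, hu'⟩ | ⟨hu, hu'⟩ | ⟨hu, hu'⟩ <;>
  rcases key v with hv | ⟨hv, hv'⟩ | ⟨hv, hv'⟩ | ⟨hv, hv'⟩ <;>
  first
  | (refine combine hT hu hv ?_ ?_ <;> simp <;> done)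
  | (refine combine hT hu hv' ?_ ?_ <;> simp <;> done)
  | (refine combine hT hu' hv ?_ ?_ <;> simp <;> done)

/-- For every finite connected graph `G` with minimum degree at least 2,
`rc(G) ≤ γ_c(G) + 2`. -/
theorem stmt_1 {V : Type*} [Fintype V] (G : SimpleGraph V) (hG : G.Connected)
    (hδ : ∀ v : V, 2 ≤ deg G v) :
    rc G ≤ connDomNum G + 2 := by
  have hne : {n | ∃ D : Set V, D.ncard = n ∧ IsDominatingSet G D ∧
      (G.induce D).Connected}.Nonempty := by
    refine ⟨_, Set.univ, rfl, fun v => Or.inl (Set.mem_univ v), ?_⟩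
    exact (SimpleGraph.induceUnivIso G).connected_iff.2 hG
  obtain ⟨D, hD, hdom, hconn⟩ := Nat.sInf_mem hne
  obtain ⟨c, hc⟩ := exists_colouring G hδ D hdom hconn
  refine Nat.sInf_le ⟨c, ?_⟩
  rw [hD] at hc
  exact hc
end

section
/- Let G be a finite connected simple interval graph with minimum degree δ(G) ≥ 2. Then diam(G) ≤ rc(G) ≤ diam(G) + 1. -/
open SimpleGraph Set

/-- Walk from `u` to `v` with pairwise distinct colours, all lying in `S`. -/
def RWalk {V : Type*} (G : SimpleGraph V) (c : Sym2 V → ℕ) (S : Set ℕ) (u v : V) : Prop :=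
  ∃ p : G.Walk u v, (p.edges.map c).Nodup ∧ ∀ k ∈ p.edges.map c, k ∈ S

section helpers
variable {V : Type*} {G : SimpleGraph V} {c : Sym2 V → ℕ}

lemma RWalk.refl (S : Set ℕ) (u : V) : RWalk G c S u u := ⟨Walk.nil, by simp, by simp⟩

lemma RWalk.mono {S T : Set ℕ} {u v : V} (h : RWalk G c S u v) (hST : S ⊆ T) :
    RWalk G c T u v := by
  obtain ⟨p, h1, h2⟩ := h
  exact ⟨p, h1, fun k hk => hST (h2 k hk)⟩

lemma RWalk.symm {S : Set ℕ} {u v : V} (h : RWalk G c S u v) : RWalk G c S v u := by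
  obtain ⟨p, h1, h2⟩ := h
  refine ⟨p.reverse, ?_, ?_⟩
  · rw [Walk.edges_reverse, List.map_reverse, List.nodup_reverse]; exact h1
  · intro k hk
    rw [Walk.edges_reverse, List.map_reverse, List.mem_reverse] at hk
    exact h2 k hk

lemma RWalk.trans {S T : Set ℕ} {u v w : V} (h : RWalk G c S u v) (h' : RWalk G c T v w)
    (hd : Disjoint S T) : RWalk G c (S ∪ T) u w := by
  obtain ⟨p, h1, h2⟩ := h
  obtain ⟨q, h3, h4⟩ := h'
  refine ⟨p.append q, ?_, ?_⟩
  · rw [Walk.edges_append, List.map_append, List.nodup_append]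
    refine ⟨h1, h3, ?_⟩
    intro a ha b hb hab
    subst hab
    exact Set.disjoint_left.1 hd (h2 _ ha) (h4 _ hb)
  · intro k hk
    rw [Walk.edges_append, List.map_append, List.mem_append] at hk
    rcases hk with hk | hk
    · exact Or.inl (h2 _ hk)
    · exact Or.inr (h4 _ hk)

lemma RWalk.edge {u v : V} (h : G.Adj u v) {k : ℕ} (hk : c s(u, v) = k) :
    RWalk G c {k} u v :=
  ⟨Walk.cons h Walk.nil, by simp, by simp [hk]⟩

lemma RWalk.path {S : Set ℕ} {u v : V} (h : RWalk G c S u v) :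
    ∃ p : G.Walk u v, p.IsPath ∧ (p.edges.map c).Nodup := by
  classical
  obtain ⟨p, h1, -⟩ := h
  refine ⟨p.bypass, p.bypass_isPath, ?_⟩
  have hn : p.bypass.edges.Nodup := p.bypass_isPath.isTrail.edges_nodup
  refine (List.nodup_map_iff_inj_on hn).2 ?_
  intro x hx y hy hxy
  exact List.inj_on_of_nodup_map h1 (p.edges_bypass_subset hx) (p.edges_bypass_subset hy) hxy

/-- Abstract two-way domination lemma. -/
lemma two_way {D : Set V} {S : Set ℕ} (hS : ∀ k ∈ S, 3 ≤ k)
    (hD : ∀ u ∈ D, ∀ v ∈ D, RWalk G c S u v)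
    (hout : ∀ v, v ∉ D →
      ((∃ d ∈ D, RWalk G c {0} v d) ∧ (∃ d ∈ D, RWalk G c {1, 2} v d)) ∨
      ((∃ d ∈ D, RWalk G c {1} v d) ∧ (∃ d ∈ D, RWalk G c {0, 2} v d))) :
    RainbowConnectedUnder G c := by
  have key : ∀ (A B : Set ℕ) (u v : V), A ⊆ {0, 1, 2} → B ⊆ {0, 1, 2} → Disjoint A B →
      (∃ d ∈ D, RWalk G c A u d) → (∃ d ∈ D, RWalk G c B v d) →
      ∃ p : G.Walk u v, p.IsPath ∧ (p.edges.map c).Nodup := by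
    rintro A B u v hA hB hAB ⟨d, hd, h1⟩ ⟨d', hd', h2⟩
    have lt3 : ∀ k ∈ ({0, 1, 2} : Set ℕ), k < 3 := by
      intro k hk
      simp only [Set.mem_insert_iff, Set.mem_singleton_iff] at hk
      omega
    refine ((h1.trans (hD d hd d' hd') ?_).trans h2.symm ?_).path
    · refine Set.disjoint_left.2 fun k hk hk' => ?_
      have := lt3 k (hA hk); have := hS k hk'; omega
    · refine Set.disjoint_left.2 fun k hk hk' => ?_
      rcases hk with hk | hk
      · exact Set.disjoint_left.1 hAB hk hk'
      · have := lt3 k (hB hk'); have := hS k hk; omega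
  have all : ∀ v, 
      ((∃ d ∈ D, RWalk G c {0} v d) ∧ (∃ d ∈ D, RWalk G c {1, 2} v d)) ∨
      ((∃ d ∈ D, RWalk G c {1} v d) ∧ (∃ d ∈ D, RWalk G c {0, 2} v d)) := by
    intro v
    by_cases hv : v ∈ D
    · exact Or.inl ⟨⟨v, hv, RWalk.refl _ _⟩, ⟨v, hv, RWalk.refl _ _⟩⟩
    · exact hout v hv
  intro u v
  rcases all u with ⟨h1, h2⟩ | ⟨h1, h2⟩ <;> rcases all v with ⟨h3, h4⟩ | ⟨h3, h4⟩
  · exact key {0} {1, 2} u v (by simp) (by simp [Set.insert_subset_iff]) (by simp) h1 h4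
  · exact key {0} {1} u v (by simp) (by simp) (by simp) h1 h3
  · exact key {1} {0} u v (by simp) (by simp) (by simp) h1 h3
  · exact key {1} {0, 2} u v (by simp) (by simp [Set.insert_subset_iff]) (by simp) h1 h4

/-- Splitting into two classes such that nonisolated vertices see the other class. -/
lemma exists_split [Finite V] (H : V → V → Prop) (hs : ∀ x y, H x y → H y x)
    (hi : ∀ x, ¬ H x x) :
    ∃ X : Set V, ∀ v, (∃ w, H v w) → ∃ w, H v w ∧ (w ∈ X ↔ v ∉ X) := by
  obtain ⟨X, hX⟩ := (Set.toFinite {S : Set V | ∀ x ∈ S, ∀ y ∈ S, ¬ H x y}).exists_maximal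
    ⟨∅, by simp⟩
  refine ⟨X, fun v ⟨w, hw⟩ => ?_⟩
  by_cases hv : v ∈ X
  · refine ⟨w, hw, ?_⟩
    have : w ∉ X := fun hwX => hX.1 v hv w hwX hw
    tauto
  · by_contra hcon
    push Not at hcon
    have hno : ∀ w ∈ X, ¬ H v w := by
      intro w hwX hvw
      have := hcon w hvw
      tauto
    have hmem : insert v X ∈ {S : Set V | ∀ x ∈ S, ∀ y ∈ S, ¬ H x y} := by
      rintro x (rfl | hx) y (rfl | hy)
      · exact hi _
      · exact hno y hy
      · exact fun h => hno x hx (hs _ _ h)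
      · exact hX.1 x hx y hy
    exact hv (hX.2 hmem (Set.subset_insert _ _) (Set.mem_insert _ _))

open Classical in
/-- The colouring. -/
noncomputable def theCol (D : Set V) (f : V → ℕ) (κ : V → V → ℕ) : Sym2 V → ℕ :=
  Sym2.lift ⟨fun u v => if u ∈ D then (if v ∈ D then min (f u) (f v) + 2 else κ v u)
    else (if v ∈ D then κ u v else 2), by
      intro u v
      by_cases hu : u ∈ D <;> by_cases hv : v ∈ D <;> simp [hu, hv, min_comm]⟩

lemma col_in {D : Set V} {f : V → ℕ} {κ : V → V → ℕ} {u v : V} (hu : u ∈ D) (hv : v ∈ D) :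
    theCol D f κ s(u, v) = min (f u) (f v) + 2 := by simp [theCol, hu, hv]

lemma col_leg {D : Set V} {f : V → ℕ} {κ : V → V → ℕ} {u v : V} (hu : u ∉ D) (hv : v ∈ D) :
    theCol D f κ s(u, v) = κ u v := by simp [theCol, hu, hv]

lemma col_out {D : Set V} {f : V → ℕ} {κ : V → V → ℕ} {u v : V} (hu : u ∉ D) (hv : v ∉ D) :
    theCol D f κ s(u, v) = 2 := by simp [theCol, hu, hv]

open Classical in
/-- Main construction: a dominating path `x 1, …, x (d-1)`. -/
lemma main_col [Finite V] (hδ : ∀ v : V, 2 ≤ deg G v) (x : ℕ → V) (f : V → ℕ) (d : ℕ)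
    (hd : 2 ≤ d) (hf : ∀ i, 1 ≤ i → i < d → f (x i) = i)
    (hadj : ∀ i, 1 ≤ i → i + 1 < d → G.Adj (x i) (x (i + 1)))
    (hdom : ∀ w, ∃ i, 1 ≤ i ∧ i < d ∧ (w = x i ∨ G.Adj w (x i))) :
    ∃ c : Sym2 V → ℕ, (∀ e ∈ G.edgeSet, c e < d + 1) ∧ RainbowConnectedUnder G c := by
  set D : Set V := {w | ∃ i, 1 ≤ i ∧ i < d ∧ w = x i} with hDdef
  have hxD : ∀ i, 1 ≤ i → i < d → x i ∈ D := fun i h1 h2 => ⟨i, h1, h2, rfl⟩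
  obtain ⟨X, hX⟩ := exists_split (fun u v => G.Adj u v ∧ u ∉ D ∧ v ∉ D)
    (fun u v h => ⟨h.1.symm, h.2.2, h.2.1⟩) (fun u h => G.loopless.irrefl u h.1)
  have hleg : ∀ v, v ∉ D → ∃ u ∈ D, G.Adj v u := by
    intro v hv
    obtain ⟨i, h1, h2, h3 | h3⟩ := hdom v
    · exact absurd ⟨i, h1, h2, h3⟩ hv
    · exact ⟨x i, hxD i h1 h2, h3⟩
  have hg0 : ∀ v, ∃ u, v ∉ D → u ∈ D ∧ G.Adj v u := by
    intro v
    by_cases hv : v ∈ D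
    · exact ⟨v, fun h => absurd hv h⟩
    · obtain ⟨u, h1, h2⟩ := hleg v hv
      exact ⟨u, fun _ => ⟨h1, h2⟩⟩
  choose g hg using hg0
  set κ : V → V → ℕ := fun v u =>
    if (∃ w, G.Adj v w ∧ v ∉ D ∧ w ∉ D) then (if v ∈ X then 0 else 1)
    else (if u = g v then 0 else 1) with hκ
  have hκle : ∀ v u, κ v u ≤ 1 := by
    intro v u
    simp only [hκ]
    split_ifs <;> simp
  refine ⟨theCol D f κ, ?_, ?_⟩
  · intro e
    induction e using Sym2.ind with
    | _ u v =>
      intro he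
      rw [SimpleGraph.mem_edgeSet] at he
      by_cases hu : u ∈ D <;> by_cases hv : v ∈ D
      · rw [col_in hu hv]
        obtain ⟨i, hi1, hi2, rfl⟩ := hu
        obtain ⟨j, hj1, hj2, rfl⟩ := hv
        rw [hf i hi1 hi2, hf j hj1 hj2]
        have : i ≠ j := by rintro rfl; exact G.loopless.irrefl _ he
        omega
      · rw [Sym2.eq_swap, col_leg hv hu]; have := hκle v u; omega
      · rw [col_leg hu hv]; have := hκle u v; omega
      · rw [col_out hu hv]; omega
  · have hw : ∀ i, 1 ≤ i → ∀ n, i + n < d →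
        RWalk G (theCol D f κ) (Set.Ico (i + 2) (i + n + 2)) (x i) (x (i + n)) := by
      intro i hi n
      induction n with
      | zero => intro _; exact RWalk.refl _ _
      | succ n ih =>
        intro hn
        have e1 : RWalk G (theCol D f κ) {i + n + 2} (x (i + n)) (x (i + n + 1)) := by
          apply RWalk.edge (hadj (i + n) (by omega) (by omega))
          rw [col_in (hxD _ (by omega) (by omega)) (hxD _ (by omega) (by omega)),
            hf _ (by omega) (by omega), hf _ (by omega) (by omega)]
          omega
        refine ((ih (by omega)).trans e1 ?_).mono ?_
        · simp
        · intro k hk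
          simp only [Set.mem_union, Set.mem_Ico, Set.mem_singleton_iff] at hk ⊢
          omega
    apply two_way (D := D) (S := {k | 3 ≤ k}) (fun k hk => hk)
    · have hle : ∀ i j, 1 ≤ i → i ≤ j → j < d →
          RWalk G (theCol D f κ) {k | 3 ≤ k} (x i) (x j) := by
        intro i j hi hij hj
        obtain ⟨n, rfl⟩ := Nat.exists_eq_add_of_le hij
        refine (hw i hi n hj).mono ?_
        intro k hk
        simp only [Set.mem_Ico, Set.mem_setOf_eq] at hk ⊢
        omega
      rintro u ⟨i, hi1, hi2, rfl⟩ v ⟨j, hj1, hj2, rfl⟩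
      rcases le_total i j with h | h
      · exact hle i j hi1 h hj2
      · exact (hle j i hj1 h hi2).symm
    · intro v hv
      by_cases hiso : ∃ w, G.Adj v w ∧ v ∉ D ∧ w ∉ D
      · obtain ⟨w, ⟨hvw, -, hwD⟩, hwX⟩ := hX v hiso
        have hisow : ∃ z, G.Adj w z ∧ w ∉ D ∧ z ∉ D := ⟨v, hvw.symm, hwD, hv⟩
        have e2 : RWalk G (theCol D f κ) {2} v w := RWalk.edge hvw (col_out hv hwD)
        have legv : ∀ k, κ v (g v) = k → RWalk G (theCol D f κ) {k} v (g v) := fun k hk =>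
          RWalk.edge (hg v hv).2 (by rw [col_leg hv (hg v hv).1, hk])
        have legw : ∀ k, κ w (g w) = k → RWalk G (theCol D f κ) {k} w (g w) := fun k hk =>
          RWalk.edge (hg w hwD).2 (by rw [col_leg hwD (hg w hwD).1, hk])
        by_cases hvX : v ∈ X
        · have hwX' : w ∉ X := by tauto
          left
          refine ⟨⟨g v, (hg v hv).1, legv 0 ?_⟩, ⟨g w, (hg w hwD).1,
            (e2.trans (legw 1 ?_) (by simp)).mono ?_⟩⟩
          · simp only [hκ]; rw [if_pos hiso, if_pos hvX]
          · simp only [hκ]; rw [if_pos hisow, if_neg hwX']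
          · intro k hk; simp at hk ⊢; omega
        · have hwX' : w ∈ X := by tauto
          right
          refine ⟨⟨g v, (hg v hv).1, legv 1 ?_⟩, ⟨g w, (hg w hwD).1,
            (e2.trans (legw 0 ?_) (by simp)).mono ?_⟩⟩
          · simp only [hκ]; rw [if_pos hiso, if_neg hvX]
          · simp only [hκ]; rw [if_pos hisow, if_pos hwX']
          · intro k hk; simp at hk ⊢; omega
      · left
        obtain ⟨u, hu, hne⟩ := Set.exists_ne_of_one_lt_ncard (s := G.neighborSet v)
          (by have := hδ v; unfold deg at this; omega) (g v)
        have huD : u ∈ D := by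
          by_contra hcon
          exact hiso ⟨u, hu, hv, hcon⟩
        refine ⟨⟨g v, (hg v hv).1, RWalk.edge (hg v hv).2 ?_⟩,
          ⟨u, huD, (RWalk.edge (k := 1) hu ?_).mono (by simp)⟩⟩
        · rw [col_leg hv (hg v hv).1]; simp only [hκ]; rw [if_neg hiso, if_pos trivial]
        · rw [col_leg hv huD]; simp only [hκ]; rw [if_neg hiso, if_neg hne]

lemma adj_interval {a b : V → ℝ}
    (hab : ∀ v, a v ≤ b v)
    (h : ∀ u v : V, u ≠ v → (G.Adj u v ↔ (Set.Icc (a u) (b u) ∩ Set.Icc (a v) (b v)).Nonempty))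
    {u v : V} (huv : u ≠ v) : G.Adj u v ↔ a u ≤ b v ∧ a v ≤ b u := by
  rw [h u v huv]
  constructor
  · rintro ⟨t, ⟨h1, h2⟩, h3, h4⟩
    exact ⟨h1.trans h4, h3.trans h2⟩
  · rintro ⟨h1, h2⟩
    exact ⟨max (a u) (a v), ⟨le_max_left _ _, max_le (hab u) h2⟩, le_max_right _ _,
      max_le h1 (hab v)⟩

lemma dist_le_graphDiam [Finite V] (u v : V) : G.dist u v ≤ graphDiam G :=
  le_csSup (Set.finite_range _).bddAbove ⟨(u, v), rfl⟩

lemma upper [Finite V] (hG : G.Connected)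
    (hint : IsIntervalGraph G) (hδ : ∀ v : V, 2 ≤ deg G v) :
    ∃ n, n ≤ graphDiam G + 1 ∧
    ∃ c : Sym2 V → ℕ, (∀ e ∈ G.edgeSet, c e < n) ∧ RainbowConnectedUnder G c := by
  obtain ⟨a, b, hab, hI⟩ := hint
  have hA : ∀ {u v : V}, u ≠ v → (G.Adj u v ↔ a u ≤ b v ∧ a v ≤ b u) :=
    fun huv => adj_interval hab hI huv
  haveI := hG.nonempty
  obtain ⟨u, hu⟩ := Finite.exists_min b
  obtain ⟨v, hv⟩ := Finite.exists_max a
  by_cases hc : a v ≤ b u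
  · refine ⟨1, by omega, fun _ => 0, by simp, ?_⟩
    intro s t
    by_cases hst : s = t
    · subst hst; exact (RWalk.refl (c := fun _ => 0) ∅ s).path
    · have : G.Adj s t := (hA hst).2
        ⟨(hv s).trans (hc.trans (hu t)), (hv t).trans (hc.trans (hu s))⟩
      exact (RWalk.edge (c := fun _ => 0) this rfl).path
  · obtain ⟨p, hp⟩ := hG.exists_walk_length_eq_dist u v
    set d := G.dist u v with hd
    have huv : u ≠ v := by rintro rfl; exact hc (hab u)
    have hnadj : ¬ G.Adj u v := fun h => hc ((hA huv).1 h).2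
    have hd0 : d ≠ 0 := fun h => huv (hG.dist_eq_zero_iff.1 h)
    have hd1 : d ≠ 1 := fun h => hnadj (SimpleGraph.dist_eq_one_iff_adj.1 h)
    have hadj : ∀ i, i < d → G.Adj (p.getVert i) (p.getVert (i + 1)) := fun i hi =>
      p.adj_getVert_succ (by omega)
    have hx0 : p.getVert 0 = u := p.getVert_zero
    have hxd : p.getVert d = v := by rw [← hp]; exact p.getVert_length
    refine ⟨d + 1, by have := dist_le_graphDiam (G := G) u v; omega, ?_⟩
    apply main_col hδ p.getVert (fun w => G.dist u w) d (by omega)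
    · intro i _ hi
      have h1 : G.dist u (p.getVert i) ≤ (p.take i).length := dist_le _
      have h2 : G.dist (p.getVert i) v ≤ (p.drop i).length := dist_le _
      have h3 := hG.dist_triangle (u := u) (v := p.getVert i) (w := v)
      rw [Walk.take_length] at h1
      rw [Walk.drop_length] at h2
      omega
    · intro i _ hi; exact hadj i (by omega)
    · intro w
      have hex : ∃ i, 1 ≤ i ∧ i ≤ d ∧ a w ≤ b (p.getVert i) :=
        ⟨d, by omega, le_rfl, by rw [hxd]; exact (hv w).trans (hab v)⟩
      classical
      obtain ⟨h1, h2, h3⟩ := Nat.find_spec hex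
      have hmin := fun m (hm : m < Nat.find hex) => Nat.find_min hex hm
      generalize Nat.find hex = i at h1 h2 h3 hmin
      obtain ⟨j, rfl⟩ : ∃ j, i = j + 1 := ⟨i - 1, by omega⟩
      have hjadj := hadj j (by omega)
      have hj := (hA hjadj.ne).1 hjadj
      have hlow : a (p.getVert (j + 1)) ≤ b w := by
        by_cases hj0 : j = 0
        · subst hj0
          rw [hx0] at hj
          exact hj.2.trans (hu w)
        · have : ¬ a w ≤ b (p.getVert j) := fun h =>
            hmin j (by omega) ⟨by omega, by omega, h⟩
          have := hab w
          linarith [hj.2]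
      have hlt : j + 1 < d := by
        by_contra hcon
        have hjd : j + 1 = d := by omega
        refine hmin j (by omega) ⟨by omega, by omega, ?_⟩
        rw [hjd, hxd] at hj
        exact (hv w).trans hj.2
      refine ⟨j + 1, h1, hlt, ?_⟩
      by_cases he : w = p.getVert (j + 1)
      · exact Or.inl he
      · exact Or.inr ((hA he).2 ⟨h3, hlow⟩)

end helpers

/-- For a finite connected interval graph `G` with minimum degree at
least 2, `diam(G) ≤ rc(G) ≤ diam(G) + 1`. -/
theorem stmt_3 {V : Type*} [Fintype V] (G : SimpleGraph V) (hG : G.Connected)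
    (hint : IsIntervalGraph G) (hδ : ∀ v : V, 2 ≤ deg G v) :
    graphDiam G ≤ rc G ∧ rc G ≤ graphDiam G + 1 := by
  obtain ⟨n, hn, hc⟩ := upper hG hint hδ
  haveI := hG.nonempty
  refine ⟨?_, (Nat.sInf_le hc).trans hn⟩
  obtain ⟨c, hc1, hc2⟩ : rc G ∈ {n | ∃ c : Sym2 V → ℕ, (∀ e ∈ G.edgeSet, c e < n) ∧
      RainbowConnectedUnder G c} := Nat.sInf_mem ⟨n, hc⟩
  refine csSup_le (Set.range_nonempty _) ?_
  rintro _ ⟨⟨u, v⟩, rfl⟩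
  obtain ⟨p, -, hp⟩ := hc2 u v
  refine (SimpleGraph.dist_le p).trans ?_
  have hsub : p.edges.map c ⊆ List.range (rc G) := by
    intro k hk
    obtain ⟨e, he, rfl⟩ := List.mem_map.1 hk
    exact List.mem_range.2 (hc1 e (p.edges_subset_edgeSet he))
  have := (hp.subperm hsub).length_le
  simpa using this
end

section
/- Let G be a finite connected simple chain graph with minimum degree δ(G) ≥ 2. Then diam(G) ≤ rc(G) ≤ 4. -/
open SimpleGraph Set

/-- Rainbow path between two vertices. -/
def RbPath {V : Type*} (G : SimpleGraph V) (c : Sym2 V → ℕ) (u v : V) : Prop :=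
  ∃ p : G.Walk u v, p.IsPath ∧ (p.edges.map c).Nodup

lemma RbPath.symm {V : Type*} {G : SimpleGraph V} {c : Sym2 V → ℕ} {u v : V}
    (h : RbPath G c u v) : RbPath G c v u := by
  obtain ⟨p, hp, hc⟩ := h
  refine ⟨p.reverse, hp.reverse, ?_⟩
  rw [SimpleGraph.Walk.edges_reverse, List.map_reverse, List.nodup_reverse]
  exact hc

lemma rb0 {V : Type*} (G : SimpleGraph V) (c : Sym2 V → ℕ) (u : V) : RbPath G c u u :=
  ⟨SimpleGraph.Walk.nil, by simp, by simp⟩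

lemma rb1 {V : Type*} {G : SimpleGraph V} (c : Sym2 V → ℕ) {u v : V} (h : G.Adj u v) :
    RbPath G c u v :=
  ⟨SimpleGraph.Walk.cons h SimpleGraph.Walk.nil, by simp [h.ne], by simp⟩

lemma rb2 {V : Type*} {G : SimpleGraph V} (c : Sym2 V → ℕ) {u w v : V} (h1 : G.Adj u w)
    (h2 : G.Adj w v) (hn : u ≠ v) (hc : c s(u, w) ≠ c s(w, v)) : RbPath G c u v :=
  ⟨.cons h1 (.cons h2 .nil), by simp [h1.ne, h2.ne, hn], by simp [hc]⟩

lemma rb3 {V : Type*} {G : SimpleGraph V} (c : Sym2 V → ℕ) {u w z v : V} (h1 : G.Adj u w)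
    (h2 : G.Adj w z) (h3 : G.Adj z v) (hn1 : u ≠ z) (hn2 : u ≠ v) (hn3 : w ≠ v)
    (hc : [c s(u, w), c s(w, z), c s(z, v)].Nodup) : RbPath G c u v :=
  ⟨.cons h1 (.cons h2 (.cons h3 .nil)), by simp [h1.ne, h2.ne, h3.ne, hn1, hn2, hn3],
    by simpa using hc⟩

lemma rb4 {V : Type*} {G : SimpleGraph V} (c : Sym2 V → ℕ) {u w z t v : V} (h1 : G.Adj u w)
    (h2 : G.Adj w z) (h3 : G.Adj z t) (h4 : G.Adj t v) (hn1 : u ≠ z) (hn2 : u ≠ t)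
    (hn3 : u ≠ v) (hn4 : w ≠ t) (hn5 : w ≠ v) (hn6 : z ≠ v)
    (hc : [c s(u, w), c s(w, z), c s(z, t), c s(t, v)].Nodup) : RbPath G c u v :=
  ⟨.cons h1 (.cons h2 (.cons h3 (.cons h4 .nil))),
    by simp [h1.ne, h2.ne, h3.ne, h4.ne, hn1, hn2, hn3, hn4, hn5, hn6],
    by simpa using hc⟩

lemma two_universal {V : Type*} [Fintype V] (G : SimpleGraph V) (S : Set V) (hS : S.Nonempty)
    (hδ : ∀ v : V, 2 ≤ deg G v)
    (hn : ∀ a₁ ∈ S, ∀ a₂ ∈ S,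
      G.neighborSet a₁ ⊆ G.neighborSet a₂ ∨ G.neighborSet a₂ ⊆ G.neighborSet a₁) :
    ∃ b₁ b₂ : V, b₁ ≠ b₂ ∧ ∀ a ∈ S, G.Adj a b₁ ∧ G.Adj a b₂ := by
  obtain ⟨a0, ha0, hmin⟩ := Set.exists_min_image S (fun a => (G.neighborSet a).ncard)
    (Set.toFinite S) hS
  have hsub : ∀ a ∈ S, G.neighborSet a0 ⊆ G.neighborSet a := by
    intro a ha
    rcases hn a0 ha0 a ha with h | h
    · exact h
    · exact (Set.eq_of_subset_of_ncard_le h (hmin a ha) (Set.toFinite _)).ge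
  have h2 : 1 < (G.neighborSet a0).ncard := hδ a0
  obtain ⟨b₁, h₁, b₂, h₂, hne⟩ := (Set.one_lt_ncard (Set.toFinite _)).1 h2
  exact ⟨b₁, b₂, hne, fun a ha => ⟨hsub a ha h₁, hsub a ha h₂⟩⟩

lemma exists_col {V : Type*} [Fintype V] (G : SimpleGraph V) (hG : G.Connected)
    (hch : IsChainGraph G) (hδ : ∀ v : V, 2 ≤ deg G v) :
    ∃ c : Sym2 V → ℕ, (∀ e ∈ G.edgeSet, c e < 4) ∧ RainbowConnectedUnder G c := by
  classical
  obtain ⟨A, B, hAB, hd, hbip, hnA⟩ := hch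
  have hm : ∀ v, v ∈ A ∨ v ∈ B := fun v => by
    have : v ∈ A ∪ B := hAB ▸ Set.mem_univ v
    exact this
  have hdis : ∀ v, v ∈ A → v ∈ B → False := fun v h1 h2 => Set.disjoint_left.1 hd h1 h2
  have hnb : ∀ v, ∃ w, G.Adj v w := by
    intro v
    have h2 : (G.neighborSet v).ncard ≠ 0 := by
      have := hδ v
      unfold deg at this
      omega
    obtain ⟨w, hw⟩ := Set.nonempty_of_ncard_ne_zero h2
    exact ⟨w, hw⟩
  have oA : ∀ u v, G.Adj u v → u ∈ A → v ∈ B := fun u v h hu =>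
    (hm v).resolve_left fun hv => (hbip u v h).1 ⟨hu, hv⟩
  have oB : ∀ u v, G.Adj u v → u ∈ B → v ∈ A := fun u v h hu =>
    (hm v).resolve_right fun hv => (hbip u v h).2 ⟨hu, hv⟩
  have hnB : ∀ a₁ ∈ B, ∀ a₂ ∈ B,
      G.neighborSet a₁ ⊆ G.neighborSet a₂ ∨ G.neighborSet a₂ ⊆ G.neighborSet a₁ := by
    intro y hy y' hy'
    by_contra hcon
    rw [not_or, Set.not_subset, Set.not_subset] at hcon
    obtain ⟨⟨x, hx, hx'⟩, ⟨z, hz, hz'⟩⟩ := hcon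
    simp only [SimpleGraph.mem_neighborSet] at hx hx' hz hz'
    rcases hnA x (oB _ _ hx hy) z (oB _ _ hz hy') with h | h
    · exact hz' (G.adj_symm (h (G.adj_symm hx)))
    · exact hx' (G.adj_symm (h (G.adj_symm hz)))
  obtain ⟨v0⟩ := hG.nonempty
  obtain ⟨w0, hw0⟩ := hnb v0
  have hAne : A.Nonempty := by
    rcases hm v0 with h | h
    · exact ⟨_, h⟩
    · exact ⟨_, oB _ _ hw0 h⟩
  have hBne : B.Nonempty := by
    obtain ⟨a, ha⟩ := hAne
    obtain ⟨w, hw⟩ := hnb a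
    exact ⟨_, oA _ _ hw ha⟩
  obtain ⟨b1, b2, hb, hbA⟩ := two_universal G A hAne hδ hnA
  obtain ⟨a1, a2, ha, haB⟩ := two_universal G B hBne hδ hnB
  have hb1 : b1 ∈ B := hAne.elim fun a h => oA _ _ (hbA a h).1 h
  have hb2 : b2 ∈ B := hAne.elim fun a h => oA _ _ (hbA a h).2 h
  have ha1 : a1 ∈ A := hBne.elim fun a h => oB _ _ (haB a h).1 h
  have ha2 : a2 ∈ A := hBne.elim fun a h => oB _ _ (haB a h).2 h
  have hne : ∀ x ∈ A, ∀ y ∈ B, x ≠ y := fun x hx y hy e => hdis x hx (e ▸ hy)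
  have n11 := hne a1 ha1 b1 hb1
  have n12 := hne a1 ha1 b2 hb2
  have n21 := hne a2 ha2 b1 hb1
  have n22 := hne a2 ha2 b2 hb2
  obtain ⟨c, hcdef⟩ : ∃ c : Sym2 V → ℕ, c = fun e => if e = s(a1, b1) then 2 else
      if e = s(a2, b1) ∨ e = s(a1, b2) then 3 else
      if b2 ∈ e ∨ a2 ∈ e then 1 else 0 := ⟨_, rfl⟩
  have c11 : c s(a1, b1) = 2 := by simp [hcdef]
  have c21 : c s(a2, b1) = 3 := by
    simp [hcdef, ha.symm, n21, n11, n11.symm, n21.symm]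
  have c12 : c s(a1, b2) = 3 := by
    simp [hcdef, hb.symm, n11, n12, n12.symm]
  have cx1 : ∀ x ∈ A, x ≠ a1 → x ≠ a2 → c s(x, b1) = 0 := by
    intro x hx h1 h2
    have := hne x hx b1 hb1
    have := hne x hx b2 hb2
    simp only [hcdef, Sym2.mem_iff, Sym2.eq_iff]
    grind
  have cx2 : ∀ x ∈ A, x ≠ a1 → x ≠ a2 → c s(x, b2) = 1 := by
    intro x hx h1 h2
    have := hne x hx b1 hb1
    have := hne x hx b2 hb2
    simp only [hcdef, Sym2.mem_iff, Sym2.eq_iff]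
    grind
  have cy1 : ∀ y ∈ B, y ≠ b1 → y ≠ b2 → c s(y, a1) = 0 := by
    intro y hy h1 h2
    have := hne a1 ha1 y hy
    have := hne a2 ha2 y hy
    simp only [hcdef, Sym2.mem_iff, Sym2.eq_iff]
    grind
  have cy2 : ∀ y ∈ B, y ≠ b1 → y ≠ b2 → c s(y, a2) = 1 := by
    intro y hy h1 h2
    have := hne a1 ha1 y hy
    have := hne a2 ha2 y hy
    simp only [hcdef, Sym2.mem_iff, Sym2.eq_iff]
    grind
  have c11' : c s(b1, a1) = 2 := by rw [Sym2.eq_swap]; exact c11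
  have c21' : c s(b1, a2) = 3 := by rw [Sym2.eq_swap]; exact c21
  have c12' : c s(b2, a1) = 3 := by rw [Sym2.eq_swap]; exact c12
  have cx1' : ∀ x ∈ A, x ≠ a1 → x ≠ a2 → c s(b1, x) = 0 := fun x hx h h' => by
    rw [Sym2.eq_swap]; exact cx1 x hx h h'
  have cx2' : ∀ x ∈ A, x ≠ a1 → x ≠ a2 → c s(b2, x) = 1 := fun x hx h h' => by
    rw [Sym2.eq_swap]; exact cx2 x hx h h'
  have cy1' : ∀ x ∈ B, x ≠ b1 → x ≠ b2 → c s(a1, x) = 0 := fun x hx h h' => by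
    rw [Sym2.eq_swap]; exact cy1 x hx h h'
  have cy2' : ∀ x ∈ B, x ≠ b1 → x ≠ b2 → c s(a2, x) = 1 := fun x hx h h' => by
    rw [Sym2.eq_swap]; exact cy2 x hx h h'
  have Ab1 : ∀ x ∈ A, G.Adj x b1 := fun x hx => (hbA x hx).1
  have Ab2 : ∀ x ∈ A, G.Adj x b2 := fun x hx => (hbA x hx).2
  have Ba1 : ∀ x ∈ B, G.Adj x a1 := fun x hx => (haB x hx).1
  have Ba2 : ∀ x ∈ B, G.Adj x a2 := fun x hx => (haB x hx).2
  -- pairs inside A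
  have a12 : RbPath G c a1 a2 := rb2 c (Ab1 a1 ha1) (Ba2 b1 hb1) ha (by rw [c11, c21']; decide)
  have b12 : RbPath G c b1 b2 :=
    rb2 c (Ba1 b1 hb1) (Ab2 a1 ha1) hb (by rw [c11', c12]; decide)
  have xa1 : ∀ x ∈ A, x ≠ a1 → x ≠ a2 → RbPath G c x a1 := fun x hx h h' =>
    rb2 c (Ab1 x hx) (Ba1 b1 hb1) h (by rw [cx1 x hx h h', c11']; decide)
  have xa2 : ∀ x ∈ A, x ≠ a1 → x ≠ a2 → RbPath G c x a2 := fun x hx h h' =>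
    rb2 c (Ab1 x hx) (Ba2 b1 hb1) h' (by rw [cx1 x hx h h', c21']; decide)
  have yb1 : ∀ y ∈ B, y ≠ b1 → y ≠ b2 → RbPath G c y b1 := fun y hy h h' =>
    rb2 c (Ba1 y hy) (Ab1 a1 ha1) h (by rw [cy1 y hy h h', c11]; decide)
  have yb2 : ∀ y ∈ B, y ≠ b1 → y ≠ b2 → RbPath G c y b2 := fun y hy h h' =>
    rb2 c (Ba1 y hy) (Ab2 a1 ha1) h' (by rw [cy1 y hy h h', c12]; decide)
  have hAA : ∀ u ∈ A, ∀ v ∈ A, RbPath G c u v := by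
    intro u hu v hv
    by_cases huv : u = v
    · subst huv; exact rb0 G c u
    by_cases hu1 : u = a1
    · subst hu1
      by_cases hv2 : v = a2
      · subst hv2; exact a12
      · exact (xa1 v hv (Ne.symm huv) hv2).symm
    by_cases hu2 : u = a2
    · subst hu2
      by_cases hv1 : v = a1
      · subst hv1; exact a12.symm
      · exact (xa2 v hv hv1 (Ne.symm huv)).symm
    by_cases hv1 : v = a1
    · subst hv1; exact xa1 u hu hu1 hu2
    by_cases hv2 : v = a2
    · subst hv2; exact xa2 u hu hu1 hu2
    exact rb4 c (Ab1 u hu) (Ba1 b1 hb1) (Ab2 a1 ha1) (Ab2 v hv).symm hu1 (hne u hu b2 hb2) huv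
      hb (hne v hv b1 hb1).symm (Ne.symm hv1)
      (by rw [cx1 u hu hu1 hu2, c11', c12, cx2' v hv hv1 hv2]; decide)
  have hBB : ∀ u ∈ B, ∀ v ∈ B, RbPath G c u v := by
    intro u hu v hv
    by_cases huv : u = v
    · subst huv; exact rb0 G c u
    by_cases hu1 : u = b1
    · subst hu1
      by_cases hv2 : v = b2
      · subst hv2; exact b12
      · exact (yb1 v hv (Ne.symm huv) hv2).symm
    by_cases hu2 : u = b2
    · subst hu2
      by_cases hv1 : v = b1
      · subst hv1; exact b12.symm
      · exact (yb2 v hv hv1 (Ne.symm huv)).symm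
    by_cases hv1 : v = b1
    · subst hv1; exact yb1 u hu hu1 hu2
    by_cases hv2 : v = b2
    · subst hv2; exact yb2 u hu hu1 hu2
    exact rb4 c (Ba1 u hu) (Ab1 a1 ha1) (Ba2 b1 hb1) (Ba2 v hv).symm hu1
      (hne a2 ha2 u hu).symm huv ha (hne a1 ha1 v hv) (Ne.symm hv1)
      (by rw [cy1 u hu hu1 hu2, c11, c21', cy2' v hv hv1 hv2]; decide)
  have hABp : ∀ u ∈ A, ∀ v ∈ B, RbPath G c u v := by
    intro u hu v hv
    by_cases hu1 : u = a1
    · subst hu1; exact rb1 c (Ba1 v hv).symm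
    by_cases hu2 : u = a2
    · subst hu2; exact rb1 c (Ba2 v hv).symm
    by_cases hv1 : v = b1
    · subst hv1; exact rb1 c (Ab1 u hu)
    by_cases hv2 : v = b2
    · subst hv2; exact rb1 c (Ab2 u hu)
    exact rb3 c (Ab1 u hu) (Ba2 b1 hb1) (Ba2 v hv).symm hu2 (hne u hu v hv) (Ne.symm hv1)
      (by rw [cx1 u hu hu1 hu2, c21', cy2' v hv hv1 hv2]; decide)
  refine ⟨c, ?_, ?_⟩
  · intro e _
    simp only [hcdef]
    split_ifs <;> omega
  · intro u v
    rcases hm u with hu | hu <;> rcases hm v with hv | hv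
    · exact hAA u hu v hv
    · exact hABp u hu v hv
    · exact (hABp v hv u hu).symm
    · exact hBB u hu v hv

/-- For a finite connected chain graph `G` with minimum degree at
least 2, `diam(G) ≤ rc(G) ≤ 4`. -/
theorem stmt_6 {V : Type*} [Fintype V] (G : SimpleGraph V) (hG : G.Connected)
    (hch : IsChainGraph G) (hδ : ∀ v : V, 2 ≤ deg G v) :
    graphDiam G ≤ rc G ∧ rc G ≤ 4 := by
  have h4 := exists_col G hG hch hδ
  refine ⟨?_, Nat.sInf_le h4⟩
  have hmem : ∃ c : Sym2 V → ℕ, (∀ e ∈ G.edgeSet, c e < rc G) ∧ RainbowConnectedUnder G c :=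
    Nat.sInf_mem (s := {n | ∃ c : Sym2 V → ℕ, (∀ e ∈ G.edgeSet, c e < n) ∧
      RainbowConnectedUnder G c}) ⟨4, h4⟩
  obtain ⟨c, hc, hr⟩ := hmem
  obtain ⟨v0⟩ := hG.nonempty
  refine csSup_le ⟨_, ⟨(v0, v0), rfl⟩⟩ ?_
  rintro _ ⟨⟨u, v⟩, rfl⟩
  obtain ⟨p, -, hp⟩ := hr u v
  refine (SimpleGraph.dist_le p).trans ?_
  have hsub : (p.edges.map c).toFinset ⊆ Finset.range (rc G) := by
    intro k hk
    rw [List.mem_toFinset, List.mem_map] at hk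
    obtain ⟨e, he, rfl⟩ := hk
    exact Finset.mem_range.2 (hc e (p.edges_subset_edgeSet he))
  have := Finset.card_le_card hsub
  rw [List.toFinset_card_of_nodup hp] at this
  simpa using this
end
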